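/- arXiv:2512.12591 — 3 statements merged into one kernel-verified Lean document; each statement's English description precedes it below -/
import Mathlib

section
/- For every positive integer k, 1 ≤ N(k+1,1) − N(k,1) ≤ 2: the function k ↦ N(k,1) is strictly increasing and increases by at most 2 at each step. -/
/-!
A code of length `n`, size `2 ^ k` and minimum distance at least `3` exists exactly when
`(n + 1) * 2 ^ k ≤ 2 ^ n`. Necessity is the sphere-packing bound
(`sphere_packing`). For sufficiency (`exists_code`), put `r = n - k`; then `n ≤ 2 ^ r - 1`, so one
can pick distinct nonzero columns `a i` in `F_2 ^ r`. Each fibre of the syndrome map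
`x ↦ ∑ i, x i • a i` has minimum distance at least `3`, and by the pigeonhole principle some fibre
has at least `2 ^ n / 2 ^ r = 2 ^ k` elements (this is a coset of a shortened Hamming code).

Both bounds then follow from elementary manipulations of the inequality: if it holds for
`(n + 1, k + 1)` then it holds for `(n, k)`, and if it holds for `(n, k)` with `n ≥ 1` then it holds
for `(n + 2, k + 1)`.
-/

/-- `N k e`: the minimal length `n` such that there exists a binary code
`C ⊆ F_2^n` with `|C| = 2^k` and minimum Hamming distance `≥ 2e+1`. -/
noncomputable def N (k e : ℕ) : ℕ :=
  sInf {n : ℕ | ∃ C : Finset (Fin n → ZMod 2), C.card = 2 ^ k ∧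
    ∀ u ∈ C, ∀ v ∈ C, u ≠ v → 2 * e + 1 ≤ hammingDist u v}

theorem zmod_two_eq_one {x : ZMod 2} (h : x ≠ 0) : x = 1 := by
  revert x; decide

/-- Sphere packing: the radius-one balls around the codewords, parametrised by
`C × Option (Fin n)` with `none` standing for the centre, are pairwise disjoint. -/
theorem sphere_packing {n : ℕ} (C : Finset (Fin n → ZMod 2))
    (hC : ∀ u ∈ C, ∀ v ∈ C, u ≠ v → 2 * 1 + 1 ≤ hammingDist u v) :
    (n + 1) * C.card ≤ 2 ^ n := by
  classical
  let e : Option (Fin n) → (Fin n → ZMod 2) := fun o => o.elim 0 (fun i => Pi.single i 1)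
  have he : Function.Injective e := by
    rintro (_ | i) (_ | j) h
    · rfl
    · have := congrFun h j
      simp [e] at this
    · have := congrFun h i
      simp [e] at this
    · have := congrFun h i
      by_cases hij : i = j
      · rw [hij]
      · simp [e, hij] at this
  have hn : ∀ (c : Fin n → ZMod 2) o, hammingDist c (c + e o) ≤ 1 := by
    intro c o
    cases o with
    | none => simp [e]
    | some i =>
      refine (Finset.card_le_card (t := {i}) ?_).trans (by simp)
      intro j hj
      by_contra hji
      simp only [Finset.mem_singleton] at hji
      simp [e, hji] at hj
  have hinj : Function.Injective
      (fun p : C × Option (Fin n) => (p.1 : Fin n → ZMod 2) + e p.2) := by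
    rintro ⟨⟨c, hc⟩, o⟩ ⟨⟨d, hd⟩, p⟩ h
    simp only at h
    have hcd : c = d := by
      by_contra hne
      have h1 := hC c hc d hd hne
      have h2 := hammingDist_triangle c (c + e o) d
      have h3 := hn c o
      have h4 := hn d p
      rw [← h, hammingDist_comm] at h4
      omega
    subst hcd
    have := he (add_left_cancel h)
    rw [this]
  have := Fintype.card_le_of_injective _ hinj
  simpa [mul_comm] using this

/-- Two words with the same syndrome with respect to distinct nonzero columns `a` are at distance
at least `3`: a difference supported on one or two coordinates would give `a i = 0` or
`a i = a j`. -/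
theorem three_le_hammingDist {n r : ℕ} (a : Fin n → Fin r → ZMod 2)
    (ha : Function.Injective a) (ha0 : ∀ i, a i ≠ 0) {u v : Fin n → ZMod 2} (huv : u ≠ v)
    (h : ∑ i, u i • a i = ∑ i, v i • a i) : 2 * 1 + 1 ≤ hammingDist u v := by
  classical
  set S : Finset (Fin n) := Finset.univ.filter fun i => u i ≠ v i with hS
  have hcard : hammingDist u v = S.card := rfl
  have hsum : ∑ i ∈ S, a i = 0 := by
    have h0 : ∑ i, (u i - v i) • a i = 0 := by
      simp [sub_smul, Finset.sum_sub_distrib, h]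
    rw [← h0, hS, Finset.sum_filter]
    refine Finset.sum_congr rfl fun i _ => ?_
    by_cases hi : u i = v i
    · simp [hi]
    · rw [if_pos hi, zmod_two_eq_one (sub_ne_zero.mpr hi), one_smul]
  have hpos : S.card ≠ 0 := by
    rw [← hcard]
    exact hammingDist_ne_zero.mpr huv
  by_contra hlt
  have : S.card = 1 ∨ S.card = 2 := by omega
  rcases this with h1 | h2
  · obtain ⟨i, hi⟩ := Finset.card_eq_one.mp h1
    rw [hi, Finset.sum_singleton] at hsum
    exact ha0 i hsum
  · obtain ⟨i, j, hij, hs⟩ := Finset.card_eq_two.mp h2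
    rw [hs, Finset.sum_pair hij] at hsum
    apply hij
    apply ha
    funext t
    have := congrFun hsum t
    simp only [Pi.add_apply, Pi.zero_apply] at this
    exact CharTwo.add_eq_zero.mp this

theorem exists_code {n k : ℕ} (h : (n + 1) * 2 ^ k ≤ 2 ^ n) :
    ∃ C : Finset (Fin n → ZMod 2), C.card = 2 ^ k ∧
      ∀ u ∈ C, ∀ v ∈ C, u ≠ v → 2 * 1 + 1 ≤ hammingDist u v := by
  classical
  have hkn : k ≤ n := by
    refine (Nat.pow_le_pow_iff_right (a := 2) (by norm_num)).mp (le_trans ?_ h)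
    exact Nat.le_mul_of_pos_left _ (Nat.succ_pos n)
  obtain ⟨r, rfl⟩ := Nat.exists_eq_add_of_le hkn
  have hr : k + r + 1 ≤ 2 ^ r := by
    rw [pow_add, mul_comm] at h
    exact Nat.le_of_mul_le_mul_left h (by positivity)
  -- An embedding of `n + 1` points, translated to send `none` to `0`, gives the columns.
  obtain ⟨f⟩ : Nonempty (Option (Fin (k + r)) ↪ (Fin r → ZMod 2)) :=
    Function.Embedding.nonempty_of_card_le (by simpa using hr)
  let a : Fin (k + r) → Fin r → ZMod 2 := fun i => f (some i) - f none
  have ha : Function.Injective a := fun i j hij =>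
    Option.some_injective _ (f.injective (sub_left_injective hij))
  have ha0 : ∀ i, a i ≠ 0 := fun i hi => by
    have := f.injective (sub_eq_zero.mp hi)
    simp at this
  obtain ⟨y, hy⟩ := Fintype.exists_le_card_fiber_of_mul_le_card
    (fun x : Fin (k + r) → ZMod 2 => ∑ i, x i • a i) (n := 2 ^ k)
    (by simp [pow_add, mul_comm])
  obtain ⟨C, hCs, hC⟩ := Finset.exists_subset_card_eq hy
  refine ⟨C, hC, fun u hu v hv huv => three_le_hammingDist a ha ha0 huv ?_⟩
  have h1 := (Finset.mem_filter.mp (hCs hu)).2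
  have h2 := (Finset.mem_filter.mp (hCs hv)).2
  exact h1.trans h2.symm

theorem N_one_eq (k : ℕ) : N k 1 = sInf {n : ℕ | (n + 1) * 2 ^ k ≤ 2 ^ n} := by
  unfold N
  congr 1
  ext n
  constructor
  · rintro ⟨C, hc, hC⟩
    have := sphere_packing C hC
    rwa [hc] at this
  · exact exists_code

/-- The set of admissible lengths is nonempty, so that the infimum defining `N k 1` is attained:
`n = 2 * k + 1` is admissible. -/
theorem N_one_spec (k : ℕ) : (N k 1 + 1) * 2 ^ k ≤ 2 ^ N k 1 := by
  rw [N_one_eq]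
  refine Nat.sInf_mem (s := {n : ℕ | (n + 1) * 2 ^ k ≤ 2 ^ n}) ⟨2 * k + 1, ?_⟩
  have h : k + 1 ≤ 2 ^ k := Nat.lt_two_pow_self
  calc (2 * k + 1 + 1) * 2 ^ k = 2 * ((k + 1) * 2 ^ k) := by ring
    _ ≤ 2 * (2 ^ k * 2 ^ k) := by gcongr
    _ = 2 ^ (2 * k + 1) := by ring

theorem N_one_le {k n : ℕ} (h : (n + 1) * 2 ^ k ≤ 2 ^ n) : N k 1 ≤ n := by
  rw [N_one_eq]
  exact Nat.sInf_le h

/-- For every positive integer `k`, `1 ≤ N(k+1,1) − N(k,1) ≤ 2`. -/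
theorem N_succ_bounds (k : ℕ) (hk : 0 < k) :
    N k 1 + 1 ≤ N (k + 1) 1 ∧ N (k + 1) 1 ≤ N k 1 + 2 := by
  have hpos : 0 < 2 ^ k := by positivity
  constructor
  · have h := N_one_spec (k + 1)
    generalize N (k + 1) 1 = m at h ⊢
    cases m with
    | zero => rw [pow_succ] at h; simp at h; omega
    | succ m =>
      refine Nat.succ_le_succ (N_one_le ?_)
      rw [pow_succ, pow_succ] at h
      nlinarith
  · have h := N_one_spec k
    generalize N k 1 = m at h ⊢
    -- Length `0` is excluded by `k > 0`; this gives `m + 3 ≤ 2 * (m + 1)`.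
    have hm : 1 ≤ m := by
      by_contra h0
      obtain rfl : m = 0 := by omega
      have := Nat.one_lt_two_pow hk.ne'
      simp at h
      omega
    apply N_one_le
    calc (m + 2 + 1) * 2 ^ (k + 1) ≤ (2 * (m + 1)) * 2 ^ (k + 1) := by gcongr; omega
      _ = 4 * ((m + 1) * 2 ^ k) := by ring
      _ ≤ 4 * 2 ^ m := by gcongr
      _ = 2 ^ (m + 2) := by ring
end

section
/- There is no linear [22,14,5]_2 code: no 14-dimensional F_2-subspace of F_2^{22} has minimum Hamming distance at least 5. Consequently NL(14,2) ≥ 23, which exceeds the Hamming bound Ham(14,2) = 22. -/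
/-!
The sphere-packing bound leaves almost no room for a `[22,14,5]` code `C`. In the syndrome space
`G = F_2^22 / C` of `2^8 = 256` elements, the syndromes of the `1 + 22 + 231 = 254` error patterns
of weight at most two are pairwise distinct, so only two syndromes are not of this form
(`card_uncovered`).

Fix a coordinate `a`. Distinct triples containing `a` have distinct syndromes, so at most two of
them have an uncovered syndrome, and these meet few coordinates. Hence there is a coordinate `j`
such that every triple `{a, j, k}` has a covered syndrome (`exists_good_pair`). The syndrome of
`{a, j, k}` is then that of some pair `{l, m}`; so `{a, j, k, l, m}` is the support of a codeword
of weight five. Two such codewords share only `a` and `j`, so the triples `{k, l, m}` partition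
the remaining `20` coordinates, although `3` does not divide `20` (`no_syndrome_map`).

A shorter code of dimension `14` and distance `5` extends by zero coordinates to length `22`, so
no length below `23` is admissible. The infimum defining `NL 14 2` is over a nonempty set: repeating
each of `14` coordinates five times gives a code of length `70`.
-/

/-- `NL k e`: the minimal length `n` such that there exists a `k`-dimensional linear
subspace `C ⊆ F_2^n` with minimum Hamming distance `≥ 2e+1`. -/
noncomputable def NL (k e : ℕ) : ℕ :=
  sInf {n : ℕ | ∃ C : Submodule (ZMod 2) (Fin n → ZMod 2),
    Module.finrank (ZMod 2) C = k ∧ ∀ x ∈ C, x ≠ 0 → 2 * e + 1 ≤ hammingNorm x}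

/-- `Ham k e`: the Hamming (sphere-packing) bound, the smallest `n` with
`(Σ_{i=0}^{e} binom(n,i)) · 2^k ≤ 2^n`. -/
noncomputable def Ham (k e : ℕ) : ℕ :=
  sInf {n : ℕ | (∑ i ∈ Finset.range (e + 1), n.choose i) * 2 ^ k ≤ 2 ^ n}

/-- The size of a symmetric difference, in a subtraction-free form. -/
theorem card_symmDiff_add {α : Type*} [DecidableEq α] (A B : Finset α) :
    (symmDiff A B).card + 2 * (A ∩ B).card = A.card + B.card := by
  have e : symmDiff A B = (A \ B) ∪ (B \ A) := rfl
  rw [e, Finset.card_union_of_disjoint disjoint_sdiff_sdiff]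
  have h1 := Finset.card_sdiff_add_card_inter A B
  have h2 := Finset.card_sdiff_add_card_inter B A
  rw [Finset.inter_comm B A] at h2
  omega

/-- An abstract syndrome map for length `22`: error patterns are identified with their supports,
addition of patterns becomes symmetric difference, and no nonempty pattern of weight at most four
has zero syndrome (minimum distance at least five). -/
structure IsSyndrome {G : Type*} [AddCommGroup G] (s : Finset (Fin 22) → G) : Prop where
  add : ∀ A B, s (symmDiff A B) = s A + s B
  ne_zero : ∀ T : Finset (Fin 22), T.Nonempty → T.card ≤ 4 → s T ≠ 0

namespace IsSyndrome

variable {G : Type*} [AddCommGroup G] {s : Finset (Fin 22) → G}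

theorem add_self (hs : IsSyndrome s) (A : Finset (Fin 22)) : s A + s A = 0 := by
  have h0 : s ∅ = 0 := by simpa using hs.add ∅ ∅
  rw [← hs.add, symmDiff_self]
  exact h0

theorem symmDiff_eq_zero (hs : IsSyndrome s) {A B : Finset (Fin 22)} (h : s A = s B) :
    s (symmDiff A B) = 0 := by
  rw [hs.add, h, hs.add_self]

theorem eq_of_card (hs : IsSyndrome s) {A B : Finset (Fin 22)} (h : s A = s B)
    (hc : (symmDiff A B).card ≤ 4) : A = B := by
  by_contra hne
  refine hs.ne_zero _ ?_ hc (hs.symmDiff_eq_zero h)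
  rw [Finset.nonempty_iff_ne_empty]
  intro h0
  exact hne (symmDiff_eq_bot.mp h0)

end IsSyndrome

/-- The error patterns of weight at most two. -/
def lightPatterns : Finset (Finset (Fin 22)) :=
  (Finset.range 3).biUnion fun i => Finset.powersetCard i Finset.univ

theorem mem_lightPatterns {T : Finset (Fin 22)} : T ∈ lightPatterns ↔ T.card ≤ 2 := by
  simp only [lightPatterns, Finset.mem_biUnion, Finset.mem_range, Finset.mem_powersetCard,
    Finset.subset_univ, true_and, exists_eq_right']
  omega

theorem card_lightPatterns : lightPatterns.card = 254 := by
  rw [lightPatterns, Finset.card_biUnion]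
  · simp [Finset.sum_range_succ, Nat.choose]
  · exact (Finset.pairwise_disjoint_powersetCard _).set_pairwise _

section

variable {G : Type*} [AddCommGroup G] [Fintype G] [DecidableEq G] {s : Finset (Fin 22) → G}

theorem card_uncovered (hG : Fintype.card G = 256) (hs : IsSyndrome s) :
    (lightPatterns.image s)ᶜ.card = 2 := by
  rw [Finset.card_compl, Finset.card_image_of_injOn, card_lightPatterns, hG]
  intro A hA B hB h
  have hA' := mem_lightPatterns.mp hA
  have hB' := mem_lightPatterns.mp hB
  have := card_symmDiff_add A B
  exact hs.eq_of_card h (by omega)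

/-- Some pair `{0, j}` is such that every triple containing it has a covered syndrome. -/
theorem exists_good_pair (hG : Fintype.card G = 256) (hs : IsSyndrome s) :
    ∃ j : Fin 22, j ≠ 0 ∧ ∀ T : Finset (Fin 22), T.card = 3 → 0 ∈ T → j ∈ T →
      ∃ P : Finset (Fin 22), P.card ≤ 2 ∧ s P = s T := by
  set Q : Finset (Finset (Fin 22)) :=
    {T | T.card = 3 ∧ 0 ∈ T ∧ s T ∈ (lightPatterns.image s)ᶜ} with hQ
  have hQcard : Q.card ≤ 2 := by
    rw [← card_uncovered hG hs]
    refine Finset.card_le_card_of_injOn s (fun T hT => ?_) ?_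
    · exact ((Finset.mem_filter.mp hT).2).2.2
    · intro A hA B hB h
      obtain ⟨-, hA3, hA0, -⟩ := Finset.mem_filter.mp hA
      obtain ⟨-, hB3, hB0, -⟩ := Finset.mem_filter.mp hB
      have h1 := card_symmDiff_add A B
      have h2 : 0 < (A ∩ B).card := Finset.card_pos.mpr ⟨0, Finset.mem_inter.mpr ⟨hA0, hB0⟩⟩
      exact hs.eq_of_card h (by omega)
  have hU : (Q.biUnion id).card ≤ Q.card * 3 :=
    Finset.card_biUnion_le_card_mul _ _ _ fun T hT => (Finset.mem_filter.mp hT).2.1.le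
  have hins := Finset.card_insert_le (0 : Fin 22) (Q.biUnion id)
  obtain ⟨j, hj⟩ : ∃ j, j ∉ insert (0 : Fin 22) (Q.biUnion id) := by
    by_contra! hall
    have := Finset.card_le_card (fun x _ => hall x : Finset.univ ⊆ insert 0 (Q.biUnion id))
    rw [Finset.card_univ, Fintype.card_fin] at this
    omega
  rw [Finset.mem_insert, not_or] at hj
  refine ⟨j, hj.1, fun T hT h0 hjT => ?_⟩
  by_contra hcon
  refine hj.2 (Finset.mem_biUnion.mpr ⟨T, ?_, hjT⟩)
  rw [hQ, Finset.mem_filter, Finset.mem_compl, Finset.mem_image]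
  refine ⟨Finset.mem_univ _, hT, h0, ?_⟩
  rintro ⟨P, hP, hPT⟩
  exact hcon ⟨P, mem_lightPatterns.mp hP, hPT⟩

/-- No group of order `256` carries a syndrome map: otherwise triples would partition a set of
`20` coordinates. -/
theorem no_syndrome_map (hG : Fintype.card G = 256) (hs : IsSyndrome s) : False := by
  obtain ⟨j, hj0, hj⟩ := exists_good_pair hG hs
  have hpair : ({0, j} : Finset (Fin 22)).card = 2 := Finset.card_pair hj0.symm
  -- The triples that complete `{0, j}` to the support of a codeword of weight five.
  set F : Finset (Finset (Fin 22)) :=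
    {W | W.card = 3 ∧ Disjoint W {0, j} ∧ s W = s {0, j}} with hF
  have hdisj : (F : Set (Finset (Fin 22))).PairwiseDisjoint id := by
    intro A hA B hB hne
    obtain ⟨-, hA3, -, hAs⟩ := Finset.mem_filter.mp hA
    obtain ⟨-, hB3, -, hBs⟩ := Finset.mem_filter.mp hB
    by_contra hnd
    have h1 := card_symmDiff_add A B
    have h2 : 0 < (A ∩ B).card := by
      rw [Finset.card_pos, ← Finset.not_disjoint_iff_nonempty_inter]
      exact hnd
    exact hne (hs.eq_of_card (hAs.trans hBs.symm) (by omega))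
  have hunion : F.biUnion id = ({0, j} : Finset (Fin 22))ᶜ := by
    ext k
    rw [Finset.mem_biUnion, Finset.mem_compl]
    constructor
    · rintro ⟨W, hW, hk⟩
      exact Finset.disjoint_left.mp (Finset.mem_filter.mp hW).2.2.1 hk
    · intro hk
      have hT : (insert k {0, j} : Finset (Fin 22)).card = 3 := by
        rw [Finset.card_insert_of_notMem hk, hpair]
      obtain ⟨P, hP, hPT⟩ := hj (insert k {0, j}) hT (by simp) (by simp)
      have h1 := card_symmDiff_add P (insert k {0, j})
      -- A relation between at most two and three coordinates must be a disjoint relation of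
      -- total weight five.
      have h5 : ¬ (symmDiff P (insert k {0, j})).card ≤ 4 := by
        intro hc
        have := hs.eq_of_card hPT hc
        rw [this] at hP
        omega
      have hP2 : P.card = 2 := by omega
      have hPd : Disjoint P (insert k {0, j}) := by
        rw [Finset.disjoint_iff_inter_eq_empty, ← Finset.card_eq_zero]
        omega
      rw [Finset.disjoint_insert_right] at hPd
      have hk' : Disjoint ({k} : Finset (Fin 22)) {0, j} := Finset.disjoint_singleton_left.mpr hk
      have e1 : insert k {0, j} = symmDiff ({k} : Finset (Fin 22)) {0, j} := by
        rw [hk'.symmDiff_eq_sup]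
        rfl
      have e2 : insert k P = symmDiff ({k} : Finset (Fin 22)) P := by
        rw [(Finset.disjoint_singleton_left.mpr hPd.1).symmDiff_eq_sup]
        rfl
      refine ⟨insert k P, ?_, Finset.mem_insert_self k P⟩
      rw [hF, Finset.mem_filter]
      refine ⟨Finset.mem_univ _, ?_, Finset.disjoint_insert_left.mpr ⟨hk, hPd.2⟩, ?_⟩
      · rw [Finset.card_insert_of_notMem hPd.1, hP2]
      · rw [e2, hs.add, hPT, e1, hs.add, ← add_assoc, hs.add_self, zero_add]
  have hcard : (F.biUnion id).card = F.card * 3 := by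
    rw [Finset.card_biUnion hdisj]
    exact Finset.sum_const_nat fun W hW => (Finset.mem_filter.mp hW).2.1
  rw [hunion, Finset.card_compl, hpair, Fintype.card_fin] at hcard
  omega

end

/-- The binary word with support `T`. -/
def word (T : Finset (Fin 22)) : Fin 22 → ZMod 2 := fun i => if i ∈ T then 1 else 0

theorem hammingNorm_word (T : Finset (Fin 22)) : hammingNorm (word T) = T.card := by
  simp [hammingNorm, word]

theorem word_symmDiff (A B : Finset (Fin 22)) : word (symmDiff A B) = word A + word B := by
  funext i
  by_cases hA : i ∈ A <;> by_cases hB : i ∈ B <;>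
    simp [word, Finset.mem_symmDiff, hA, hB, CharTwo.add_self_eq_zero]

theorem no_code_22 : ¬ ∃ C : Submodule (ZMod 2) (Fin 22 → ZMod 2),
    Module.finrank (ZMod 2) C = 14 ∧ ∀ x ∈ C, x ≠ 0 → 5 ≤ hammingNorm x := by
  classical
  rintro ⟨C, hC, hd⟩
  have : Fintype ((Fin 22 → ZMod 2) ⧸ C) := Fintype.ofFinite _
  have hG : Fintype.card ((Fin 22 → ZMod 2) ⧸ C) = 256 := by
    have h := Submodule.finrank_quotient_add_finrank C
    rw [hC, Module.finrank_fin_fun] at h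
    have h8 : Module.finrank (ZMod 2) ((Fin 22 → ZMod 2) ⧸ C) = 8 := by omega
    rw [Module.card_eq_pow_finrank (K := ZMod 2), h8, ZMod.card]
    norm_num
  refine no_syndrome_map (s := fun T => C.mkQ (word T)) hG ⟨fun A B => ?_, fun T hT h4 h0 => ?_⟩
  · rw [word_symmDiff, map_add]
  · have hmem : word T ∈ C := by simpa using h0
    have hne : word T ≠ 0 := by
      rw [← hammingNorm_ne_zero_iff, hammingNorm_word]
      exact hT.card_pos.ne'
    have := hd _ hmem hne
    rw [hammingNorm_word] at this
    omega

/-- Appending zero coordinates preserves the dimension of a code and the weights of its words, so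
any larger length is attained with the same dimension and distance. -/
theorem exists_code_of_le {n m k d : ℕ} (hnm : n ≤ m)
    (h : ∃ C : Submodule (ZMod 2) (Fin n → ZMod 2),
      Module.finrank (ZMod 2) C = k ∧ ∀ x ∈ C, x ≠ 0 → d ≤ hammingNorm x) :
    ∃ C : Submodule (ZMod 2) (Fin m → ZMod 2),
      Module.finrank (ZMod 2) C = k ∧ ∀ x ∈ C, x ≠ 0 → d ≤ hammingNorm x := by
  obtain ⟨C, hC, hd⟩ := h
  set f : Fin n → Fin m := Fin.castLE hnm
  have hf : Function.Injective f := Fin.castLE_injective hnm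
  set E := Function.ExtendByZero.linearMap (ZMod 2) f
  have hE : ∀ x i, E x (f i) = x i := fun x i => hf.extend_apply _ _ _
  have hinj : Function.Injective E := fun x y hxy => funext fun i => by
    rw [← hE x, ← hE y, hxy]
  refine ⟨C.map E, ?_, ?_⟩
  · rw [← hC]
    exact (Submodule.equivMapOfInjective E hinj C).finrank_eq.symm
  · rintro _ ⟨x, hx, rfl⟩ hne
    have hx0 : x ≠ 0 := by
      rintro rfl
      exact hne (map_zero E)
    refine (hd x hx hx0).trans (Finset.card_le_card_of_injOn f (fun i hi => ?_) hf.injOn)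
    simpa [hE] using hi

/-- The five-fold repetition of each of `14` information bits. -/
theorem exists_code_70 : ∃ C : Submodule (ZMod 2) (Fin (14 * 5) → ZMod 2),
    Module.finrank (ZMod 2) C = 14 ∧ ∀ x ∈ C, x ≠ 0 → 5 ≤ hammingNorm x := by
  set R := LinearMap.funLeft (ZMod 2) (ZMod 2) (fun i : Fin (14 * 5) => i.divNat)
  have hR : ∀ y a b, R y (finProdFinEquiv (a, b)) = y a := fun y a b => by
    have h : (finProdFinEquiv (a, b)).divNat = a :=
      congrArg Prod.fst (finProdFinEquiv.symm_apply_apply (a, b))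
    exact congrArg y h
  have hinj : Function.Injective R := fun x y hxy => funext fun a => by
    rw [← hR x a 0, ← hR y a 0, hxy]
  refine ⟨LinearMap.range R, ?_, ?_⟩
  · rw [LinearMap.finrank_range_of_inj hinj, Module.finrank_fin_fun]
  · rintro _ ⟨y, rfl⟩ hne
    obtain ⟨a, ha⟩ : ∃ a, y a ≠ 0 := by
      by_contra! hall
      have hy : y = 0 := funext hall
      exact hne (by rw [hy, map_zero])
    have h5 : (Finset.univ : Finset (Fin 5)).card = 5 := by simp
    refine h5.symm.le.trans (Finset.card_le_card_of_injOn (fun b => finProdFinEquiv (a, b))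
      (fun b _ => ?_) fun b _ c _ hbc => ?_)
    · rw [Finset.mem_coe, Finset.mem_filter, hR]
      exact ⟨Finset.mem_univ _, ha⟩
    · exact (Prod.mk.inj (finProdFinEquiv.injective hbc)).2

theorem NL_lower : 23 ≤ NL 14 2 := by
  -- Nonemptiness matters: the infimum of the empty set of naturals is `0`.
  refine le_csInf ⟨14 * 5, exists_code_70⟩ fun n hn => ?_
  by_contra hlt
  exact no_code_22 (exists_code_of_le (by omega) hn)

theorem Ham_eq : Ham 14 2 = 22 := by
  refine IsLeast.csInf_eq ⟨?_, fun n hn => ?_⟩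
  · simp [Finset.sum_range_succ, Nat.choose]
  · by_contra! hlt
    rw [Set.mem_ofPred_eq] at hn
    interval_cases n <;> simp [Finset.sum_range_succ, Nat.choose] at hn

/-- There is no linear `[22,14,5]₂` code; consequently `NL(14,2) ≥ 23`, which exceeds
the Hamming bound `Ham(14,2) = 22`. -/
theorem no_22_14_5_code :
    (¬ ∃ C : Submodule (ZMod 2) (Fin 22 → ZMod 2),
        Module.finrank (ZMod 2) C = 14 ∧ ∀ x ∈ C, x ≠ 0 → 5 ≤ hammingNorm x) ∧
      23 ≤ NL 14 2 ∧ Ham 14 2 = 22 ∧ Ham 14 2 < NL 14 2 := by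
  refine ⟨no_code_22, NL_lower, Ham_eq, ?_⟩
  rw [Ham_eq]
  exact NL_lower
end

section
/- There is no linear [31,22,5]_2 code: no 22-dimensional F_2-subspace of F_2^{31} has minimum Hamming distance at least 5. Consequently NL(22,2) ≥ 32, which exceeds the Hamming bound Ham(22,2) = 31. -/
/-! ### Counting syndromes of pairs and triples -/

section Syndromes

open Finset
open scoped symmDiff

variable {V : Type*} [AddCommGroup V] {h : Fin 31 → V}

lemma sum_symmDiff_of_add_self (h2 : ∀ v : V, v + v = 0) (s t : Finset (Fin 31)) :
    ∑ i ∈ s ∆ t, h i = ∑ i ∈ s, h i + ∑ i ∈ t, h i := by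
  have h1 := sum_inter_add_sum_sdiff s t h
  have h3 := sum_inter_add_sum_sdiff t s h
  have hd : Disjoint (s \ t) (t \ s) := disjoint_sdiff_sdiff
  have he : s ∆ t = (s \ t) ∪ (t \ s) := rfl
  rw [he, sum_union hd, ← h1, ← h3, inter_comm t s]
  have := h2 (∑ i ∈ s ∩ t, h i)
  calc _ = (∑ i ∈ s ∩ t, h i + ∑ i ∈ s ∩ t, h i) +
        (∑ i ∈ s \ t, h i + ∑ i ∈ t \ s, h i) := by rw [this, zero_add]
    _ = _ := by abel

/-- Sets with equal sums and symmetric difference of size at most four coincide. -/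
lemma eq_of_sum_eq (h2 : ∀ v : V, v + v = 0)
    (hS : ∀ s : Finset (Fin 31), s.Nonempty → #s ≤ 4 → ∑ i ∈ s, h i ≠ 0)
    {s t : Finset (Fin 31)} (hst : ∑ i ∈ s, h i = ∑ i ∈ t, h i) (hc : #(s ∆ t) ≤ 4) :
    s = t := by
  by_contra hne
  refine hS (s ∆ t) ?_ hc ?_
  · rw [nonempty_iff_ne_empty]
    intro h0
    exact hne (symmDiff_eq_bot.1 h0)
  · rw [sum_symmDiff_of_add_self h2, hst, h2]

lemma card_symmDiff_add_s18 (s t : Finset (Fin 31)) : #(s ∆ t) + 2 * #(s ∩ t) = #s + #t := by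
  have hd : Disjoint (s \ t) (t \ s) := disjoint_sdiff_sdiff
  have he : s ∆ t = (s \ t) ∪ (t \ s) := rfl
  rw [he, card_union_of_disjoint hd]
  have h1 := card_sdiff_add_card_inter s t
  have h3 := card_sdiff_add_card_inter t s
  rw [inter_comm t s] at h3
  omega

lemma card_biUnion_triples (h2 : ∀ v : V, v + v = 0)
    (hS : ∀ s : Finset (Fin 31), s.Nonempty → #s ≤ 4 → ∑ i ∈ s, h i ≠ 0)
    (v : V) (B : Finset (Finset (Fin 31))) (hB : ∀ b ∈ B, #b = 3 ∧ ∑ i ∈ b, h i = v) :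
    #(B.biUnion id) = 3 * #B := by
  rw [card_biUnion, sum_congr rfl (g := fun _ => 3) (fun b (hb : b ∈ B) => show #(id b) = 3 from (hB b hb).1),
    sum_const, smul_eq_mul, mul_comm]
  intro b hb c hc hbc
  by_contra hnd
  apply hbc
  apply eq_of_sum_eq h2 hS ((hB b hb).2.trans (hB c hc).2.symm)
  have h1 := card_symmDiff_add_s18 b c
  have h3 : 0 < #(b ∩ c) := by
    rw [card_pos, nonempty_iff_ne_empty]
    intro h0
    exact hnd (disjoint_iff_inter_eq_empty.2 h0)
  have := (hB b hb).1
  have := (hB c hc).1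
  omega

/-- 3-sets with a common sum are pairwise disjoint, so they pack into any set containing them. -/
lemma three_mul_card_le (h2 : ∀ v : V, v + v = 0)
    (hS : ∀ s : Finset (Fin 31), s.Nonempty → #s ≤ 4 → ∑ i ∈ s, h i ≠ 0)
    (v : V) (B : Finset (Finset (Fin 31))) (hB : ∀ b ∈ B, #b = 3 ∧ ∑ i ∈ b, h i = v)
    (G : Finset (Fin 31)) (hG : ∀ b ∈ B, b ⊆ G) : 3 * #B ≤ #G := by
  rw [← card_biUnion_triples h2 hS v B hB]
  exact card_le_card (biUnion_subset.2 hG)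

variable [Fintype V] [DecidableEq V]

/-- The far syndromes: elements that are not a sum of at most two of the `h i`. -/
def farSet (h : Fin 31 → V) : Finset V :=
  ((univ.filter fun s : Finset (Fin 31) => #s ≤ 2).image fun s => ∑ i ∈ s, h i)ᶜ

lemma mem_farSet {v : V} :
    v ∈ farSet h ↔ ∀ s : Finset (Fin 31), #s ≤ 2 → ∑ i ∈ s, h i ≠ v := by
  simp [farSet]

lemma card_filter_le_two : #(univ.filter fun s : Finset (Fin 31) => #s ≤ 2) = 497 := by
  have : (univ.filter fun s : Finset (Fin 31) => #s ≤ 2) =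
      (range 3).biUnion fun k => powersetCard k univ := by
    ext s
    simp [Nat.lt_succ_iff]
  rw [this, card_biUnion]
  · simp [sum_range_succ, Nat.choose]
  · intro a _ b _ hab
    exact pairwise_disjoint_powersetCard _ hab

lemma card_farSet (h2 : ∀ v : V, v + v = 0)
    (hS : ∀ s : Finset (Fin 31), s.Nonempty → #s ≤ 4 → ∑ i ∈ s, h i ≠ 0)
    (hV : Fintype.card V = 512) : #(farSet h) = 15 := by
  rw [farSet, card_compl, card_image_of_injOn, card_filter_le_two, hV]
  intro s hs t ht hst
  simp only [coe_filter, mem_univ, true_and, Set.mem_ofPred_eq] at hs ht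
  apply eq_of_sum_eq h2 hS hst
  have := card_symmDiff_add_s18 s t
  omega

/-- The 3-sets whose sum is a far syndrome. -/
def farTriples (h : Fin 31 → V) : Finset (Finset (Fin 31)) :=
  (powersetCard 3 univ).filter fun T => ∑ i ∈ T, h i ∈ farSet h

lemma card_farTriples (h2 : ∀ v : V, v + v = 0)
    (hS : ∀ s : Finset (Fin 31), s.Nonempty → #s ≤ 4 → ∑ i ∈ s, h i ≠ 0)
    (hV : Fintype.card V = 512) : #(farTriples h) ≤ 150 := by
  have key := card_le_mul_card_image_of_maps_to (s := farTriples h) (t := farSet h)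
    (f := fun T => ∑ i ∈ T, h i) (fun T hT => (mem_filter.1 hT).2) 10 ?_
  · rw [card_farSet h2 hS hV] at key
    exact key
  · intro v _
    have := three_mul_card_le h2 hS v ((farTriples h).filter fun T => ∑ i ∈ T, h i = v) ?_ univ
      (fun _ _ => subset_univ _)
    · simp only [card_univ, Fintype.card_fin] at this
      omega
    · intro b hb
      simp only [farTriples, mem_filter, mem_powersetCard] at hb
      exact ⟨hb.1.1.2, hb.2⟩

/-- Every pair lies in at least two triples with a far sum. -/
lemma two_le_far (h2 : ∀ v : V, v + v = 0)
    (hS : ∀ s : Finset (Fin 31), s.Nonempty → #s ≤ 4 → ∑ i ∈ s, h i ≠ 0)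
    (P : Finset (Fin 31)) (hP : #P = 2) :
    2 ≤ #((farTriples h).filter fun T => P ⊆ T) := by
  set B : Finset (Finset (Fin 31)) :=
    (powersetCard 3 Pᶜ).filter fun b => ∑ i ∈ b, h i = ∑ i ∈ P, h i with hBdef
  have hB : ∀ b ∈ B, #b = 3 ∧ ∑ i ∈ b, h i = ∑ i ∈ P, h i := by
    intro b hb
    simp only [hBdef, mem_filter, mem_powersetCard] at hb
    exact ⟨hb.1.2, hb.2⟩
  have hBP : ∀ b ∈ B, b ⊆ Pᶜ := by
    intro b hb
    simp only [hBdef, mem_filter, mem_powersetCard] at hb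
    exact hb.1.1
  have hPc : #Pᶜ = 29 := by rw [card_compl, hP, Fintype.card_fin]
  have hU := card_biUnion_triples h2 hS _ B hB
  have hle := three_mul_card_le h2 hS _ B hB _ hBP
  have hsub : B.biUnion id ⊆ Pᶜ := biUnion_subset.2 hBP
  -- The uncovered points outside `P`; as `29` is `2` modulo `3`, at least two of them exist.
  have hunc : 2 ≤ #(Pᶜ \ B.biUnion id) := by
    rw [card_sdiff_of_subset hsub, hU]
    omega
  refine hunc.trans (card_le_card_of_injOn (fun k => insert k P) ?_ ?_)
  · intro k hk
    simp only [coe_sdiff, Set.mem_sdiff, mem_coe, mem_compl] at hk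
    obtain ⟨hkP, hkB⟩ := hk
    have hc3 : #(insert k P) = 3 := by rw [card_insert_of_notMem hkP, hP]
    simp only [mem_coe, mem_filter, farTriples, mem_powersetCard, subset_univ, true_and]
    refine ⟨⟨hc3, mem_farSet.2 ?_⟩, subset_insert _ _⟩
    intro t ht hsum
    have hcard := card_symmDiff_add_s18 t (insert k P)
    have hbig : ¬ #(t ∆ insert k P) ≤ 4 := by
      intro hle4
      have := eq_of_sum_eq h2 hS hsum hle4
      rw [this] at ht
      omega
    have hint : #(t ∩ insert k P) = 0 := by omega
    have ht2 : #t = 2 := by omega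
    have hdisj : Disjoint t (insert k P) := disjoint_iff_inter_eq_empty.2 (card_eq_zero.1 hint)
    rw [disjoint_insert_right] at hdisj
    -- A non-far sum would put `k` into the 3-set `insert k t`, which has the same sum as `P`.
    apply hkB
    rw [mem_biUnion]
    refine ⟨insert k t, ?_, mem_insert_self _ _⟩
    simp only [hBdef, mem_filter, mem_powersetCard]
    refine ⟨⟨?_, by rw [card_insert_of_notMem hdisj.1, ht2]⟩, ?_⟩
    · rw [insert_subset_iff]
      exact ⟨mem_compl.2 hkP, fun x hx => mem_compl.2 (disjoint_left.1 hdisj.2 hx)⟩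
    · rw [sum_insert hdisj.1, hsum, sum_insert hkP, ← add_assoc, h2, zero_add]
  · intro k hk l hl hkl
    simp only [coe_sdiff, Set.mem_sdiff, mem_coe, mem_compl] at hk hl
    have : k ∈ insert l P := by
      have hkl' : insert k P = insert l P := hkl
      rw [← hkl']
      exact mem_insert_self _ _
    exact (mem_insert.1 this).resolve_right hk.1

/-- No 31 elements of an elementary abelian group of order `2 ^ 9` are such that all nonempty
subfamilies of size at most four have nonzero sum. -/
lemma no_syndromes (h2 : ∀ v : V, v + v = 0)
    (hS : ∀ s : Finset (Fin 31), s.Nonempty → #s ≤ 4 → ∑ i ∈ s, h i ≠ 0)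
    (hV : Fintype.card V = 512) : False := by
  have key := card_mul_le_card_mul (s := powersetCard 2 (univ : Finset (Fin 31)))
    (t := farTriples h) (m := 2) (n := 3) (fun P T => P ⊆ T) ?_ ?_
  · have h1 := card_farTriples h2 hS hV
    have hp : #(powersetCard 2 (univ : Finset (Fin 31))) = 465 := by
      simp [Nat.choose]
    omega
  · intro P hP
    exact two_le_far h2 hS P (mem_powersetCard.1 hP).2
  · intro T hT
    have hT3 : #T = 3 := (mem_powersetCard.1 (mem_filter.1 hT).1).2
    have : (powersetCard 2 (univ : Finset (Fin 31))).bipartiteBelow (fun P T => P ⊆ T) T ⊆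
        powersetCard 2 T := by
      intro P hP
      simp only [bipartiteBelow, mem_filter, mem_powersetCard] at hP
      exact mem_powersetCard.2 ⟨hP.2, hP.1.2⟩
    refine (card_le_card this).trans ?_
    rw [card_powersetCard, hT3]
    decide

end Syndromes

/-! ### From codes to syndromes -/

lemma no_code_31 (C : Submodule (ZMod 2) (Fin 31 → ZMod 2))
    (hC : Module.finrank (ZMod 2) C = 22) (hd : ∀ x ∈ C, x ≠ 0 → 5 ≤ hammingNorm x) : False := by
  classical
  have : Finite ((Fin 31 → ZMod 2) ⧸ C) :=
    Finite.of_surjective _ (Submodule.mkQ_surjective C)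
  let _ : Fintype ((Fin 31 → ZMod 2) ⧸ C) := Fintype.ofFinite _
  refine no_syndromes (V := (Fin 31 → ZMod 2) ⧸ C)
    (h := fun i => C.mkQ (Pi.single i 1)) ?_ ?_ ?_
  · intro v
    rw [← two_smul (ZMod 2) v, show (2 : ZMod 2) = 0 from rfl, zero_smul]
  · intro s hs hs4 h0
    rw [← map_sum, Submodule.mkQ_apply, Submodule.Quotient.mk_eq_zero] at h0
    have hx : (∑ i ∈ s, Pi.single i (1 : ZMod 2) : Fin 31 → ZMod 2) =
        fun j => if j ∈ s then 1 else 0 := by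
      ext j
      simp [Finset.sum_apply, Pi.single_apply]
    have hw : hammingNorm (fun j : Fin 31 => if j ∈ s then (1 : ZMod 2) else 0) = s.card := by
      simp [hammingNorm]
    rw [hx] at h0
    have h5 := hd _ h0 ?_
    · omega
    · rw [← hammingNorm_pos_iff, hw]
      exact hs.card_pos
  · have hq := Submodule.finrank_quotient_add_finrank C
    rw [hC, Module.finrank_fin_fun] at hq
    rw [Module.card_eq_pow_finrank (K := ZMod 2),
      show Module.finrank (ZMod 2) ((Fin 31 → ZMod 2) ⧸ C) = 9 by omega, ZMod.card]
    norm_num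

/-- Codes of length at most 31 are padded with zeros to length 31. -/
lemma no_code_le {n : ℕ} (hn : n ≤ 31) (C : Submodule (ZMod 2) (Fin n → ZMod 2))
    (hC : Module.finrank (ZMod 2) C = 22) (hd : ∀ x ∈ C, x ≠ 0 → 5 ≤ hammingNorm x) : False := by
  have hinj : Function.Injective (Fin.castLE hn) := Fin.castLE_injective hn
  let f := Function.ExtendByZero.linearMap (ZMod 2) (Fin.castLE hn)
  have hf (x : Fin n → ZMod 2) (i : Fin n) : f x (Fin.castLE hn i) = x i :=
    hinj.extend_apply x 0 i
  have hfi : Function.Injective f := by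
    intro x y hxy
    ext i
    rw [← hf x, ← hf y, hxy]
  refine no_code_31 (C.map f) ?_ ?_
  · rw [← hC]
    exact (Submodule.equivMapOfInjective f hfi C).finrank_eq.symm
  · rintro _ ⟨x, hx, rfl⟩ hne
    have hx0 : x ≠ 0 := by
      rintro rfl
      exact hne (map_zero f)
    refine (hd x hx hx0).trans ?_
    refine Finset.card_le_card_of_injOn (Fin.castLE hn) ?_ hinj.injOn
    intro i hi
    simpa [hf] using hi

/-! ### Values of `NL` and `Ham` -/

/-- The fivefold repetition of `F_2^22` is a `[110,22,5]` code. -/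
lemma exists_code_s18 : ∃ C : Submodule (ZMod 2) (Fin (22 * 5) → ZMod 2),
    Module.finrank (ZMod 2) C = 22 ∧ ∀ x ∈ C, x ≠ 0 → 2 * 2 + 1 ≤ hammingNorm x := by
  let e : Fin 22 × Fin 5 ≃ Fin (22 * 5) := finProdFinEquiv
  let f := LinearMap.funLeft (ZMod 2) (ZMod 2) (fun i => (e.symm i).1)
  have hf (x : Fin 22 → ZMod 2) (i : Fin 22) (j : Fin 5) : f x (e (i, j)) = x i := by
    simp [f, LinearMap.funLeft_apply]
  have hfi : Function.Injective f := by
    intro x y hxy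
    ext i
    rw [← hf x i 0, ← hf y i 0, hxy]
  refine ⟨LinearMap.range f, ?_, ?_⟩
  · rw [LinearMap.finrank_range_of_inj hfi, Module.finrank_fin_fun]
  · rintro _ ⟨x, rfl⟩ hne
    have hx0 : x ≠ 0 := by
      rintro rfl
      exact hne (map_zero f)
    obtain ⟨i, hi⟩ := Function.ne_iff.1 hx0
    have h5 : (Finset.univ : Finset (Fin 5)).card = 5 := by simp
    calc 2 * 2 + 1 = (Finset.univ : Finset (Fin 5)).card := h5.symm
      _ ≤ hammingNorm (f x) := by
        refine Finset.card_le_card_of_injOn (fun j => e (i, j)) ?_ ?_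
        · intro j _
          simpa [hf] using hi
        · intro j _ k _ hjk
          simpa using hjk

lemma ham_22_2 : Ham 22 2 = 31 := by
  refine le_antisymm (Nat.sInf_le ?_) (le_csInf ⟨31, ?_⟩ ?_)
  · simp [Finset.sum_range_succ, Nat.choose]
  · simp [Finset.sum_range_succ, Nat.choose]
  · intro n hn
    by_contra hlt
    have hlt' : n < 31 := by omega
    simp only [Set.mem_ofPred_eq] at hn
    interval_cases n <;> revert hn <;> decide

lemma le_nl_22_2 : 32 ≤ NL 22 2 := by
  refine le_csInf ⟨_, exists_code_s18⟩ ?_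
  rintro n ⟨C, hC, hd⟩
  by_contra hlt
  exact no_code_le (by omega) C hC hd

/-- There is no linear `[31,22,5]₂` code; consequently `NL(22,2) ≥ 32`, which exceeds
the Hamming bound `Ham(22,2) = 31`. -/
theorem no_31_22_5_code :
    (¬ ∃ C : Submodule (ZMod 2) (Fin 31 → ZMod 2),
        Module.finrank (ZMod 2) C = 22 ∧ ∀ x ∈ C, x ≠ 0 → 5 ≤ hammingNorm x) ∧
      32 ≤ NL 22 2 ∧ Ham 22 2 = 31 ∧ Ham 22 2 < NL 22 2 := by
  refine ⟨fun ⟨C, hC, hd⟩ => no_code_31 C hC hd, le_nl_22_2, ham_22_2, ?_⟩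
  rw [ham_22_2]
  exact le_nl_22_2
end
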